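/- Fix vehicle length l > 0, uncertainty parameter σₒ > 0 and positive constants T, L, τ. For fixed headway η > 0, the collision-inclusive capacity v ↦ s(v,η) = 1/(η + (T·L)/(τ·v)·p(v,η)) is strictly increasing in the speed v on (0,∞). -/

import Mathlib

open MeasureTheory Real Filter Set

/-- The standard Gaussian probability density function. -/
noncomputable def stdGaussianPDF (x : ℝ) : ℝ :=
  (Real.sqrt (2 * Real.pi))⁻¹ * Real.exp (-x ^ 2 / 2)

/-- The standard Gaussian cumulative distribution function Φ. -/
noncomputable def stdGaussianCDF (x : ℝ) : ℝ :=
  ∫ t in Set.Iic x, stdGaussianPDF t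

/-- The per-time-step collision probability p(v,η) = Φ((l − v·η)/(v·σₒ·√η)). -/
noncomputable def collisionProb (l σₒ v η : ℝ) : ℝ :=
  stdGaussianCDF ((l - v * η) / (v * σₒ * Real.sqrt η))

/-- The collision-inclusive capacity s(v,η) = 1/(η + (T·L)/(τ·v)·p(v,η)). -/
noncomputable def cic (l σₒ T L τ v η : ℝ) : ℝ :=
  1 / (η + (T * L) / (τ * v) * collisionProb l σₒ v η)

/-!
For `v > 0` the Gaussian argument is `l / (v * σₒ * √η) - η / (σₒ * √η)`, so the collision
probability is antitone in `v`. As it is also positive, its product with the strictly decreasing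
factor `T * L / (τ * v)` is strictly decreasing; the capacity is the reciprocal of `η` plus this
product.
-/

open ProbabilityTheory

theorem cdf_pos (μ : Measure ℝ) [IsProbabilityMeasure μ] [μ.IsOpenPosMeasure] (x : ℝ) :
    0 < cdf μ x := by
  rw [cdf_eq_real]
  have nonempty_interior : (interior (Iic x)).Nonempty := by simp only [interior_Iic, nonempty_Iio]
  exact ENNReal.toReal_pos (Measure.measure_pos_of_nonempty_interior μ nonempty_interior).ne'
    (measure_ne_top μ _)

theorem isOpenPosMeasure_gaussianReal (μ : ℝ) {v : NNReal} (hv : v ≠ 0) :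
    (gaussianReal μ v).IsOpenPosMeasure :=
  (gaussianReal_absolutelyContinuous' μ hv).isOpenPosMeasure

theorem strictAntiOn_mul_of_antitoneOn {α R : Type*} [Preorder α] [MulZeroClass R] [Preorder R]
    [PosMulMono R] [MulPosStrictMono R] {f g : α → R} {s : Set α}
    (hf : StrictAntiOn f s) (hg : AntitoneOn g s)
    (hf_nonneg : ∀ x ∈ s, 0 ≤ f x) (hg_pos : ∀ x ∈ s, 0 < g x) :
    StrictAntiOn (fun x => f x * g x) s := fun a ha b hb hab =>
  mul_lt_mul (hf ha hb hab) (hg ha hb hab.le) (hg_pos b hb) (hf_nonneg a ha)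

theorem strictAntiOn_div_const_mul {K : Type*} [Field K] [LinearOrder K] [IsStrictOrderedRing K]
    {c k : K} (hc : 0 < c) (hk : 0 < k) : StrictAntiOn (fun x : K => c / (k * x)) (Ioi 0) :=
  fun _a ha _b _hb hab =>
    div_lt_div_of_pos_left hc (mul_pos hk ha) (mul_lt_mul_of_pos_left hab hk)

theorem stdGaussianPDF_eq_gaussianPDFReal : stdGaussianPDF = gaussianPDFReal 0 1 := by
  ext x
  simp [stdGaussianPDF, gaussianPDFReal]

theorem stdGaussianCDF_eq_cdf_gaussianReal : stdGaussianCDF = cdf (gaussianReal 0 1) := by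
  ext x
  have integral_pdf_nonneg : 0 ≤ ∫ t in Iic x, gaussianPDFReal 0 1 t :=
    integral_nonneg (gaussianPDFReal_nonneg 0 1)
  rw [cdf_eq_real, measureReal_def, gaussianReal_apply_eq_integral 0 one_ne_zero,
    ENNReal.toReal_ofReal integral_pdf_nonneg, stdGaussianCDF, stdGaussianPDF_eq_gaussianPDFReal]

theorem stdGaussianCDF_pos (x : ℝ) : 0 < stdGaussianCDF x := by
  have := isOpenPosMeasure_gaussianReal 0 one_ne_zero
  rw [stdGaussianCDF_eq_cdf_gaussianReal]
  exact cdf_pos _ x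

theorem monotone_stdGaussianCDF : Monotone stdGaussianCDF :=
  stdGaussianCDF_eq_cdf_gaussianReal ▸ monotone_cdf _

theorem antitoneOn_sub_mul_div_mul {K : Type*} [Field K] [LinearOrder K] [IsStrictOrderedRing K]
    {l σ : K} (hl : 0 ≤ l) (hσ : 0 ≤ σ) (η : K) :
    AntitoneOn (fun v : K => (l - v * η) / (v * σ)) (Ioi 0) := by
  intro a ha b hb hab
  have split_quotient {v : K} (hv : v ∈ Ioi 0) :
      (l - v * η) / (v * σ) = l / v / σ - η / σ := by
    rw [← div_div, sub_div, mul_div_cancel_left₀ η (ne_of_gt hv), sub_div]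
  have : l / b ≤ l / a := div_le_div_of_nonneg_left hl ha hab
  simp only [split_quotient ha, split_quotient hb]
  gcongr

theorem collisionProb_pos (l σₒ v η : ℝ) : 0 < collisionProb l σₒ v η :=
  stdGaussianCDF_pos _

theorem collisionProb_antitoneOn_speed {l σₒ : ℝ} (hl : 0 ≤ l) (hσ : 0 ≤ σₒ) (η : ℝ) :
    AntitoneOn (fun v => collisionProb l σₒ v η) (Ioi 0) := by
  simp only [collisionProb, mul_assoc _ σₒ]
  exact monotone_stdGaussianCDF.comp_antitoneOn
    (antitoneOn_sub_mul_div_mul hl (mul_nonneg hσ (sqrt_nonneg η)) η)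

/-- for fixed headway η > 0, the collision-inclusive capacity
v ↦ s(v,η) is strictly increasing in the speed v on (0,∞). -/
theorem cic_strictMonoOn_speed (l σₒ T L τ η : ℝ)
    (hl : 0 < l) (hσ : 0 < σₒ) (hT : 0 < T) (hL : 0 < L) (hτ : 0 < τ)
    (hη : 0 < η) :
    StrictMonoOn (fun v => cic l σₒ T L τ v η) (Set.Ioi 0) := by
  have rate_pos : ∀ v ∈ Ioi (0 : ℝ), 0 < T * L / (τ * v) := fun v hv =>
    div_pos (mul_pos hT hL) (mul_pos hτ hv)
  have loss_strictAntiOn :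
      StrictAntiOn (fun v => T * L / (τ * v) * collisionProb l σₒ v η) (Ioi 0) :=
    strictAntiOn_mul_of_antitoneOn (strictAntiOn_div_const_mul (mul_pos hT hL) hτ)
      (collisionProb_antitoneOn_speed hl.le hσ.le η) (fun v hv => (rate_pos v hv).le)
      fun v _ => collisionProb_pos l σₒ v η
  have headway_add_loss_pos : ∀ v ∈ Ioi (0 : ℝ),
      0 < η + T * L / (τ * v) * collisionProb l σₒ v η := fun v hv =>
    add_pos hη (mul_pos (rate_pos v hv) (collisionProb_pos l σₒ v η))
  exact one_div_strictAntiOn.comp (loss_strictAntiOn.const_add η) headway_add_loss_pos
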